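/- Let (V,E) be any member of the SpGEMM DAG family 𝒢(A,B) and let S ≥ 1 be an integer. Then every S-partition of (V,E) has at least h parts, where h is the minimum cardinality of a partition {𝒱_1,…,𝒱_h} of the fine-grained vertex set 𝒱 satisfying |W^A(𝒱_i)| ≤ S, |W^B(𝒱_i)| ≤ S, and |W^C(𝒱_i)| ≤ S for each i. -/

import Mathlib

/-- The multiplication set `V^m`. -/
def Vm (SA SB : Set (ℕ × ℕ)) : Set (ℕ × ℕ × ℕ) :=
  {t | (t.1, t.2.1) ∈ SA ∧ (t.2.1, t.2.2) ∈ SB}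

/-- The nonzero structure `S_C` of the output matrix. -/
def SC (SA SB : Set (ℕ × ℕ)) : Set (ℕ × ℕ) :=
  {p | ∃ k, (p.1, k) ∈ SA ∧ (k, p.2) ∈ SB}

/-- A member of the SpGEMM DAG family `𝒢(A,B)`: a finite DAG whose vertices are
the pairwise distinct input vertices `v^A_{ik}` (`(i,k) ∈ S_A`) and `v^B_{kj}`
(`(k,j) ∈ S_B`), the multiplication vertices `v_{ikj}` (`(i,k,j) ∈ V^m`), and
the vertices of a summation tree `T_{ij}` for each `(i,j) ∈ S_C`; each `T_{ij}`
is a finite directed tree oriented toward a single root `root (i,j)`, whose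
leaves (zero-indegree vertices) are exactly the multiplication vertices
`v_{ikj}`, and whose non-leaf vertices are distinct from the vertices of every
other tree and from all input and multiplication vertices.  The edges are the
input edges `(v^A_{ik}, v_{ikj})` and `(v^B_{kj}, v_{ikj})` for
`(i,k,j) ∈ V^m` together with all summation-tree edges. -/
structure SpGEMMDag (SA SB : Set (ℕ × ℕ)) where
  /-- the vertex type -/
  V : Type
  /-- the DAG is finite -/
  finV : Finite V
  /-- the edge relation -/
  E : V → V → Prop
  /-- input vertices `v^A_{ik}` -/
  vA : ℕ × ℕ → V
  /-- input vertices `v^B_{kj}` -/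
  vB : ℕ × ℕ → V
  /-- multiplication vertices `v_{ikj}` -/
  vm : ℕ × ℕ × ℕ → V
  /-- vertex set of the summation tree `T_{ij}` -/
  tree : ℕ × ℕ → Set V
  /-- edge relation of the summation tree `T_{ij}` -/
  treeE : ℕ × ℕ → V → V → Prop
  /-- root of the summation tree `T_{ij}` -/
  root : ℕ × ℕ → V
  /-- the graph is acyclic -/
  acyclic : ∀ v : V, ¬ Relation.TransGen E v v
  /-- the `v^A` vertices are pairwise distinct -/
  vA_inj : Set.InjOn vA SA
  /-- the `v^B` vertices are pairwise distinct -/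
  vB_inj : Set.InjOn vB SB
  /-- the multiplication vertices are pairwise distinct -/
  vm_inj : Set.InjOn vm (Vm SA SB)
  /-- the `v^A` and `v^B` vertices are distinct -/
  vA_ne_vB : ∀ p ∈ SA, ∀ q ∈ SB, vA p ≠ vB q
  /-- input vertices `v^A` do not lie in any summation tree -/
  vA_notin_tree : ∀ p ∈ SA, ∀ q ∈ SC SA SB, vA p ∉ tree q
  /-- input vertices `v^B` do not lie in any summation tree -/
  vB_notin_tree : ∀ p ∈ SB, ∀ q ∈ SC SA SB, vB p ∉ tree q
  /-- distinct summation trees are vertex-disjoint -/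
  trees_disjoint : ∀ p ∈ SC SA SB, ∀ q ∈ SC SA SB, p ≠ q → Disjoint (tree p) (tree q)
  /-- `v_{ikj}` is a vertex of `T_{ij}` -/
  vm_mem_tree : ∀ t ∈ Vm SA SB, vm t ∈ tree (t.1, t.2.2)
  /-- `v_{ikj}` lies in no tree other than `T_{ij}` -/
  vm_mem_tree_only : ∀ t ∈ Vm SA SB, ∀ p ∈ SC SA SB, vm t ∈ tree p → p = (t.1, t.2.2)
  /-- every vertex is an input vertex or a summation-tree vertex (multiplication
  vertices are the leaves of the summation trees) -/
  vertex_cases : ∀ v : V, (∃ p ∈ SA, v = vA p) ∨ (∃ p ∈ SB, v = vB p) ∨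
      (∃ p ∈ SC SA SB, v ∈ tree p)
  /-- the root of `T_{ij}` is a vertex of `T_{ij}` -/
  root_mem : ∀ p ∈ SC SA SB, root p ∈ tree p
  /-- tree edges join vertices of their tree -/
  treeE_mem : ∀ p u v, treeE p u v → p ∈ SC SA SB ∧ u ∈ tree p ∧ v ∈ tree p
  /-- all tree edges are oriented toward the root: every non-root tree vertex
  has exactly one outgoing tree edge -/
  succ_unique : ∀ p ∈ SC SA SB, ∀ u ∈ tree p, u ≠ root p → ∃! v, treeE p u v
  /-- the root has no outgoing tree edge -/
  root_no_succ : ∀ p ∈ SC SA SB, ∀ v, ¬ treeE p (root p) v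
  /-- the zero-indegree vertices (leaves) of `T_{ij}` are exactly the
  multiplication vertices `v_{ikj}` -/
  leaves_iff : ∀ p ∈ SC SA SB, ∀ v ∈ tree p,
      ((∀ u, ¬ treeE p u v) ↔ ∃ k, (p.1, k, p.2) ∈ Vm SA SB ∧ v = vm (p.1, k, p.2))
  /-- the edge set consists exactly of the input edges and the tree edges -/
  edge_iff : ∀ u v, E u v ↔
      ((∃ t ∈ Vm SA SB, (u = vA (t.1, t.2.1) ∨ u = vB (t.2.1, t.2.2)) ∧ v = vm t) ∨
       (∃ p, treeE p u v))

/-- An input of the DAG: a vertex with no incoming edges. -/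
def SpGEMMDag.IsInput {SA SB : Set (ℕ × ℕ)} (G : SpGEMMDag SA SB) (v : G.V) : Prop :=
  ∀ u, ¬ G.E u v

/-- `D` is a dominator set of `U`: every directed path from an input to a
vertex of `U` contains a vertex of `D`. -/
def SpGEMMDag.IsDominator {SA SB : Set (ℕ × ℕ)} (G : SpGEMMDag SA SB)
    (U D : Set G.V) : Prop :=
  ∀ (a : G.V) (l : List G.V), List.Chain G.E a l → G.IsInput a →
    (a :: l).getLast (List.cons_ne_nil a l) ∈ U → ∃ d ∈ D, d ∈ a :: l

/-- The minimum set of `U`: elements of `U` with no successor in `U`. -/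
def SpGEMMDag.minSet {SA SB : Set (ℕ × ℕ)} (G : SpGEMMDag SA SB)
    (U : Set G.V) : Set G.V :=
  {u ∈ U | ∀ v, G.E u v → v ∉ U}

/-- Vertices of the fine-grained SpGEMM hypergraph. -/
inductive FGVertex : Type
  | mult (i k j : ℕ)
  | nzA (i k : ℕ)
  | nzB (k j : ℕ)
  | nzC (i j : ℕ)
deriving DecidableEq

/-- The fine-grained vertex set `𝒱`. -/
def FGV (SA SB : Set (ℕ × ℕ)) : Set FGVertex :=
  {v | (∃ t ∈ Vm SA SB, v = .mult t.1 t.2.1 t.2.2) ∨ (∃ p ∈ SA, v = .nzA p.1 p.2) ∨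
       (∃ p ∈ SB, v = .nzB p.1 p.2) ∨ (∃ p ∈ SC SA SB, v = .nzC p.1 p.2)}

/-- The net `n^A_{ik}`. -/
def netA (SB : Set (ℕ × ℕ)) (i k : ℕ) : Set FGVertex :=
  {v | (∃ j, (k, j) ∈ SB ∧ v = .mult i k j) ∨ v = .nzA i k}

/-- The net `n^B_{kj}`. -/
def netB (SA : Set (ℕ × ℕ)) (k j : ℕ) : Set FGVertex :=
  {v | (∃ i, (i, k) ∈ SA ∧ v = .mult i k j) ∨ v = .nzB k j}

/-- The net `n^C_{ij}`. -/
def netC (SA SB : Set (ℕ × ℕ)) (i j : ℕ) : Set FGVertex :=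
  {v | (∃ k, (i, k) ∈ SA ∧ (k, j) ∈ SB ∧ v = .mult i k j) ∨ v = .nzC i j}

/-- `W^A(𝒱')`: the `A`-nets meeting `𝒱'`. -/
def WA (SA SB : Set (ℕ × ℕ)) (X : Set FGVertex) : Set (ℕ × ℕ) :=
  {p ∈ SA | (netA SB p.1 p.2 ∩ X).Nonempty}

/-- `W^B(𝒱')`: the `B`-nets meeting `𝒱'`. -/
def WB (SA SB : Set (ℕ × ℕ)) (X : Set FGVertex) : Set (ℕ × ℕ) :=
  {p ∈ SB | (netB SA p.1 p.2 ∩ X).Nonempty}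

/-- `W^C(𝒱')`: the `C`-nets meeting `𝒱'`. -/
def WC (SA SB : Set (ℕ × ℕ)) (X : Set FGVertex) : Set (ℕ × ℕ) :=
  {p ∈ SC SA SB | (netC SA SB p.1 p.2 ∩ X).Nonempty}

/-- An indexed partition of the set `X` into `n` (possibly empty) parts. -/
def IsIndexedPartition {α : Type*} (X : Set α) {n : ℕ} (P : Fin n → Set α) : Prop :=
  (∀ i, P i ⊆ X) ∧ (⋃ i, P i) = X ∧ ∀ i j, i ≠ j → Disjoint (P i) (P j)

/-- An `S`-partition of the DAG `G`: a partition `{V_1,…,V_h}` of the vertices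
such that each part has a dominator set of size at most `S`, each part has
minimum set of size at most `S`, and there is no cyclic dependence among the
parts, where `V_i` depends on `V_j` if `(V_i × V_j) ∩ E ≠ ∅`. -/
def SpGEMMDag.IsSPartition {SA SB : Set (ℕ × ℕ)} (G : SpGEMMDag SA SB)
    (S : ℕ) {h : ℕ} (P : Fin h → Set G.V) : Prop :=
  ((⋃ i, P i) = Set.univ ∧ (∀ i, (P i).Nonempty) ∧
    ∀ i j, i ≠ j → Disjoint (P i) (P j)) ∧
  (∀ i, ∃ D : Set G.V, G.IsDominator (P i) D ∧ D.ncard ≤ S) ∧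
  (∀ i, (G.minSet (P i)).ncard ≤ S) ∧
  (∀ i : Fin h, ¬ Relation.TransGen
      (fun a b : Fin h => a ≠ b ∧ ∃ u ∈ P a, ∃ v ∈ P b, G.E u v) i i)

/-!
Represent each fine-grained vertex by a vertex of the DAG: `v_{ikj}`, `v^A_{ik}` and `v^B_{kj}` by
their namesakes and `v^C_{ij}` by the root of `T_{ij}`. A cover of the DAG, once made disjoint, then
pulls back to a partition of `𝒱`. The nets are carried into three families of pairwise disjoint
vertex sets: `n^A_{ik}` and `n^B_{kj}` into an input vertex together with its out-neighbours, and
`n^C_{ij}` into the tree `T_{ij}`. If a part meets one of the former sets then so does each of its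
dominator sets, since a path with at most one edge runs from the input to the part inside that set;
if it meets a tree then so does its minimum set, since trees are closed under out-neighbours. Since
the sets in each family are disjoint, the number of nets met is at most the size of the dominator
set, respectively of the minimum set.
-/

theorem ncard_le_ncard_of_pairwiseDisjoint_of_inter_nonempty {ι α : Type*} {s : Set ι}
    {F : ι → Set α} {T : Set α} (hF : s.PairwiseDisjoint F) (hT : T.Finite)
    (hmeet : ∀ i ∈ s, (F i ∩ T).Nonempty) : s.ncard ≤ T.ncard := by
  choose f hfF hfT using hmeet
  have := hT.to_subtype
  refine Nat.card_le_card_of_injective (fun i : s => (⟨f i i.2, hfT i i.2⟩ : T)) ?_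
  intro i j hij
  have hf : f i i.2 = f j j.2 := congrArg Subtype.val hij
  exact Subtype.ext (hF.elim_set i.2 j.2 _ (hfF i i.2) (hf ▸ hfF j j.2))

theorem isIndexedPartition_inter_preimage_disjointed {α β : Type*} {n : ℕ} {P : Fin n → Set β}
    (hP : ⋃ i, P i = Set.univ) (f : α → β) (X : Set α) :
    IsIndexedPartition X fun i => X ∩ f ⁻¹' disjointed P i := by
  refine ⟨fun i => Set.inter_subset_left, ?_, fun i j hij => ?_⟩
  · rw [← Set.inter_iUnion, ← Set.preimage_iUnion, iUnion_disjointed, hP, Set.preimage_univ,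
      Set.inter_univ]
  · exact ((disjoint_disjointed P hij).preimage f).mono Set.inter_subset_right
      Set.inter_subset_right

namespace SpGEMMDag

variable {SA SB : Set (ℕ × ℕ)} (G : SpGEMMDag SA SB)

theorem pairwiseDisjoint_tree : (SC SA SB).PairwiseDisjoint G.tree :=
  fun p hp q hq hpq => G.trees_disjoint p hp q hq hpq

theorem mem_SC_of_mem_Vm {t : ℕ × ℕ × ℕ} (ht : t ∈ Vm SA SB) : (t.1, t.2.2) ∈ SC SA SB :=
  ⟨t.2.1, ht.1, ht.2⟩

theorem exists_mem_tree_of_edge {u v : G.V} (huv : G.E u v) : ∃ p ∈ SC SA SB, v ∈ G.tree p := by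
  rcases (G.edge_iff u v).1 huv with ⟨t, ht, -, rfl⟩ | ⟨p, hp⟩
  · exact ⟨_, mem_SC_of_mem_Vm ht, G.vm_mem_tree t ht⟩
  · obtain ⟨hpC, -, hv⟩ := G.treeE_mem p u v hp
    exact ⟨p, hpC, hv⟩

theorem mem_tree_of_edge {p : ℕ × ℕ} (hp : p ∈ SC SA SB) {u v : G.V} (hu : u ∈ G.tree p)
    (huv : G.E u v) : v ∈ G.tree p := by
  rcases (G.edge_iff u v).1 huv with ⟨t, ht, rfl | rfl, -⟩ | ⟨q, hq⟩
  · exact absurd hu (G.vA_notin_tree _ ht.1 p hp)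
  · exact absurd hu (G.vB_notin_tree _ ht.2 p hp)
  · obtain ⟨hqC, huq, hvq⟩ := G.treeE_mem q u v hq
    rwa [G.pairwiseDisjoint_tree.elim_set hp hqC u hu huq]

theorem isInput_vA {p : ℕ × ℕ} (hp : p ∈ SA) : G.IsInput (G.vA p) := fun _ hu =>
  let ⟨q, hq, hpq⟩ := G.exists_mem_tree_of_edge hu
  G.vA_notin_tree p hp q hq hpq

theorem isInput_vB {p : ℕ × ℕ} (hp : p ∈ SB) : G.IsInput (G.vB p) := fun _ hu =>
  let ⟨q, hq, hpq⟩ := G.exists_mem_tree_of_edge hu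
  G.vB_notin_tree p hp q hq hpq

theorem edge_vA_iff {p : ℕ × ℕ} (hp : p ∈ SA) {v : G.V} :
    G.E (G.vA p) v ↔ ∃ t ∈ Vm SA SB, (t.1, t.2.1) = p ∧ v = G.vm t := by
  constructor
  · intro hv
    rcases (G.edge_iff _ _).1 hv with ⟨t, ht, hA | hB, hvt⟩ | ⟨q, hq⟩
    · exact ⟨t, ht, (G.vA_inj hp ht.1 hA).symm, hvt⟩
    · exact absurd hB (G.vA_ne_vB p hp _ ht.2)
    · obtain ⟨hqC, hpq, -⟩ := G.treeE_mem q _ v hq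
      exact absurd hpq (G.vA_notin_tree p hp q hqC)
  · rintro ⟨t, ht, rfl, hvt⟩
    exact (G.edge_iff _ _).2 (.inl ⟨t, ht, .inl rfl, hvt⟩)

theorem edge_vB_iff {p : ℕ × ℕ} (hp : p ∈ SB) {v : G.V} :
    G.E (G.vB p) v ↔ ∃ t ∈ Vm SA SB, (t.2.1, t.2.2) = p ∧ v = G.vm t := by
  constructor
  · intro hv
    rcases (G.edge_iff _ _).1 hv with ⟨t, ht, hA | hB, hvt⟩ | ⟨q, hq⟩
    · exact absurd hA.symm (G.vA_ne_vB _ ht.1 p hp)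
    · exact ⟨t, ht, (G.vB_inj hp ht.2 hB).symm, hvt⟩
    · obtain ⟨hqC, hpq, -⟩ := G.treeE_mem q _ v hq
      exact absurd hpq (G.vB_notin_tree p hp q hqC)
  · rintro ⟨t, ht, rfl, hvt⟩
    exact (G.edge_iff _ _).2 (.inl ⟨t, ht, .inr rfl, hvt⟩)

/-- The closed out-neighbourhood of a vertex: the vertex itself and its out-neighbours. -/
def closedOutNbhd (a : G.V) : Set G.V :=
  insert a {v | G.E a v}

theorem pairwiseDisjoint_closedOutNbhd {ι : Type*} {s : Set ι} {f : ι → G.V} (hf : s.InjOn f)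
    (hinput : ∀ p ∈ s, G.IsInput (f p))
    (huniq : ∀ p ∈ s, ∀ q ∈ s, ∀ v, G.E (f p) v → G.E (f q) v → p = q) :
    s.PairwiseDisjoint fun p => G.closedOutNbhd (f p) := by
  intro p hp q hq hpq
  refine Set.disjoint_left.2 ?_
  rintro v (rfl | hpv) (hqv | hqv)
  · exact hpq (hf hp hq hqv)
  · exact hinput p hp _ hqv
  · exact hinput q hq _ (hqv ▸ hpv)
  · exact hpq (huniq p hp q hq v hpv hqv)

theorem pairwiseDisjoint_closedOutNbhd_vA :
    SA.PairwiseDisjoint fun p => G.closedOutNbhd (G.vA p) := by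
  refine G.pairwiseDisjoint_closedOutNbhd G.vA_inj (fun _ => G.isInput_vA) ?_
  intro p hp q hq v hpv hqv
  obtain ⟨t, ht, rfl, rfl⟩ := (G.edge_vA_iff hp).1 hpv
  obtain ⟨t', ht', rfl, htt'⟩ := (G.edge_vA_iff hq).1 hqv
  rw [G.vm_inj ht ht' htt']

theorem pairwiseDisjoint_closedOutNbhd_vB :
    SB.PairwiseDisjoint fun p => G.closedOutNbhd (G.vB p) := by
  refine G.pairwiseDisjoint_closedOutNbhd G.vB_inj (fun _ => G.isInput_vB) ?_
  intro p hp q hq v hpv hqv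
  obtain ⟨t, ht, rfl, rfl⟩ := (G.edge_vB_iff hp).1 hpv
  obtain ⟨t', ht', rfl, htt'⟩ := (G.edge_vB_iff hq).1 hqv
  rw [G.vm_inj ht ht' htt']

variable {G} in
theorem IsDominator.closedOutNbhd_inter_nonempty {U D : Set G.V} (hD : G.IsDominator U D)
    {a : G.V} (ha : G.IsInput a) (hU : (G.closedOutNbhd a ∩ U).Nonempty) :
    (G.closedOutNbhd a ∩ D).Nonempty := by
  obtain ⟨v, rfl | hav, hvU⟩ := hU
  · obtain ⟨d, hd, hmem⟩ := hD v [] (List.IsChain.singleton v) ha hvU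
    exact ⟨d, .inl (List.mem_singleton.1 hmem), hd⟩
  · obtain ⟨d, hd, hmem⟩ := hD a [v] (List.isChain_pair.2 hav) ha hvU
    rcases List.mem_pair.1 hmem with rfl | rfl
    exacts [⟨d, .inl rfl, hd⟩, ⟨d, .inr hav, hd⟩]

theorem wellFounded_flip_edge : WellFounded (flip G.E) := by
  have := G.finV
  have : Std.Irrefl (flip (Relation.TransGen G.E)) := ⟨G.acyclic⟩
  have : IsTrans G.V (flip (Relation.TransGen G.E)) := ⟨fun _ _ _ hab hbc => hbc.trans hab⟩
  exact Subrelation.wf (fun huv => Relation.TransGen.single huv :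
    Subrelation (flip G.E) (flip (Relation.TransGen G.E)))
    (Finite.wellFounded_of_trans_of_irrefl (flip (Relation.TransGen G.E)))

theorem inter_minSet_nonempty {T U : Set G.V} (hT : ∀ u ∈ T, ∀ v, G.E u v → v ∈ T)
    (hTU : (T ∩ U).Nonempty) : (T ∩ G.minSet U).Nonempty := by
  obtain ⟨v, ⟨hvT, hvU⟩, hlast⟩ := G.wellFounded_flip_edge.has_min (T ∩ U) hTU
  exact ⟨v, hvT, hvU, fun w hvw hwU => hlast w ⟨hT v hvT w hvw, hwU⟩ hvw⟩

section Nets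

/-- The DAG vertex representing a fine-grained vertex. The DAG has no vertex `v^C_{ij}` of its own;
the root of `T_{ij}` takes its place. -/
def ofFGVertex : FGVertex → G.V
  | .mult i k j => G.vm (i, k, j)
  | .nzA i k => G.vA (i, k)
  | .nzB k j => G.vB (k, j)
  | .nzC i j => G.root (i, j)

theorem mapsTo_ofFGVertex_netA {p : ℕ × ℕ} (hp : p ∈ SA) :
    Set.MapsTo G.ofFGVertex (netA SB p.1 p.2) (G.closedOutNbhd (G.vA p)) := by
  rintro _ (⟨j, hj, rfl⟩ | rfl)
  exacts [.inr ((G.edge_vA_iff hp).2 ⟨(p.1, p.2, j), ⟨hp, hj⟩, rfl, rfl⟩), .inl rfl]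

theorem mapsTo_ofFGVertex_netB {p : ℕ × ℕ} (hp : p ∈ SB) :
    Set.MapsTo G.ofFGVertex (netB SA p.1 p.2) (G.closedOutNbhd (G.vB p)) := by
  rintro _ (⟨i, hi, rfl⟩ | rfl)
  exacts [.inr ((G.edge_vB_iff hp).2 ⟨(i, p.1, p.2), ⟨hi, hp⟩, rfl, rfl⟩), .inl rfl]

theorem mapsTo_ofFGVertex_netC {p : ℕ × ℕ} (hp : p ∈ SC SA SB) :
    Set.MapsTo G.ofFGVertex (netC SA SB p.1 p.2) (G.tree p) := by
  rintro _ (⟨k, hA, hB, rfl⟩ | rfl)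
  exacts [G.vm_mem_tree (p.1, k, p.2) ⟨hA, hB⟩, G.root_mem p hp]

variable {G} {X : Set FGVertex} {U : Set G.V}

theorem ncard_WA_le {D : Set G.V} (hX : Set.MapsTo G.ofFGVertex X U) (hD : G.IsDominator U D) :
    (WA SA SB X).ncard ≤ D.ncard := by
  have := G.finV
  refine ncard_le_ncard_of_pairwiseDisjoint_of_inter_nonempty
    (G.pairwiseDisjoint_closedOutNbhd_vA.subset (Set.sep_subset _ _)) D.toFinite ?_
  rintro p ⟨hp, x, hx, hxX⟩
  exact hD.closedOutNbhd_inter_nonempty (G.isInput_vA hp)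
    ⟨_, G.mapsTo_ofFGVertex_netA hp hx, hX hxX⟩

theorem ncard_WB_le {D : Set G.V} (hX : Set.MapsTo G.ofFGVertex X U) (hD : G.IsDominator U D) :
    (WB SA SB X).ncard ≤ D.ncard := by
  have := G.finV
  refine ncard_le_ncard_of_pairwiseDisjoint_of_inter_nonempty
    (G.pairwiseDisjoint_closedOutNbhd_vB.subset (Set.sep_subset _ _)) D.toFinite ?_
  rintro p ⟨hp, x, hx, hxX⟩
  exact hD.closedOutNbhd_inter_nonempty (G.isInput_vB hp)
    ⟨_, G.mapsTo_ofFGVertex_netB hp hx, hX hxX⟩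

theorem ncard_WC_le (hX : Set.MapsTo G.ofFGVertex X U) :
    (WC SA SB X).ncard ≤ (G.minSet U).ncard := by
  have := G.finV
  refine ncard_le_ncard_of_pairwiseDisjoint_of_inter_nonempty
    (G.pairwiseDisjoint_tree.subset (Set.sep_subset _ _)) (Set.toFinite _) ?_
  rintro p ⟨hp, x, hx, hxX⟩
  exact G.inter_minSet_nonempty (fun _ hu _ => G.mem_tree_of_edge hp hu)
    ⟨_, G.mapsTo_ofFGVertex_netC hp hx, hX hxX⟩

end Nets

end SpGEMMDag

theorem spartition_parts_lower_bound_general {SA SB : Set (ℕ × ℕ)} (G : SpGEMMDag SA SB)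
    {S h : ℕ}
    (hmin : IsLeast {n : ℕ | ∃ Q : Fin n → Set FGVertex,
        IsIndexedPartition (FGV SA SB) Q ∧
        ∀ i, (WA SA SB (Q i)).ncard ≤ S ∧ (WB SA SB (Q i)).ncard ≤ S ∧
          (WC SA SB (Q i)).ncard ≤ S} h)
    {h' : ℕ} {P : Fin h' → Set G.V} (hcover : ⋃ i, P i = Set.univ)
    (hdom : ∀ i, ∃ D : Set G.V, G.IsDominator (P i) D ∧ D.ncard ≤ S)
    (hminSet : ∀ i, (G.minSet (P i)).ncard ≤ S) : h ≤ h' := by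
  refine hmin.2 ⟨fun i => FGV SA SB ∩ G.ofFGVertex ⁻¹' disjointed P i,
    isIndexedPartition_inter_preimage_disjointed hcover G.ofFGVertex _, fun i => ?_⟩
  have hmaps : Set.MapsTo G.ofFGVertex (FGV SA SB ∩ G.ofFGVertex ⁻¹' disjointed P i) (P i) :=
    fun _ hx => disjointed_subset P i hx.2
  obtain ⟨D, hD, hDS⟩ := hdom i
  exact ⟨(SpGEMMDag.ncard_WA_le hmaps hD).trans hDS, (SpGEMMDag.ncard_WB_le hmaps hD).trans hDS,
    (SpGEMMDag.ncard_WC_le hmaps).trans (hminSet i)⟩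

/-- Every `S`-partition of a member of `𝒢(A,B)` has at least
`h` parts, where `h` is the minimum cardinality of a partition `{𝒱_1,…,𝒱_h}`
of the fine-grained vertex set `𝒱` satisfying `|W^A(𝒱_i)| ≤ S`,
`|W^B(𝒱_i)| ≤ S`, and `|W^C(𝒱_i)| ≤ S` for each `i`. -/
theorem spartition_parts_lower_bound
    (SA SB : Set (ℕ × ℕ)) (G : SpGEMMDag SA SB)
    (S : ℕ) (hS : 1 ≤ S) (h : ℕ)
    (hmin : IsLeast {n : ℕ | ∃ Q : Fin n → Set FGVertex,
        IsIndexedPartition (FGV SA SB) Q ∧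
        ∀ i, (WA SA SB (Q i)).ncard ≤ S ∧ (WB SA SB (Q i)).ncard ≤ S ∧
          (WC SA SB (Q i)).ncard ≤ S} h)
    (h' : ℕ) (P : Fin h' → Set G.V) (hP : G.IsSPartition S P) :
    h ≤ h' := by
  obtain ⟨⟨hcover, -, -⟩, hdom, hminSet, -⟩ := hP
  exact spartition_parts_lower_bound_general G hmin hcover hdom hminSet
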